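/- Let f be differentiable on I° with f' integrable on [a,b], a < b, α,λ ∈ [0,1], q > 1 with 1/p + 1/q = 1, and |f'|^q h-convex on [a,b]. Set C = (1-α)[|f'((1-α)b+αa)|^q + |f'(a)|^q], D = α[|f'((1-α)b+αa)|^q + |f'(b)|^q], ε₁ = (αλ)^{p+1} + (1-α-αλ)^{p+1}, ε₃ = (λ(1-α))^{p+1} + (α-λ(1-α))^{p+1}. If αλ ≤ 1-α ≤ 1-λ(1-α), then |λ(αf(a)+(1-α)f(b)) + (1-λ)f(αa+(1-α)b) - (1/(b-a))∫ₐᵇ f(x)dx| ≤ (b-a)(1/(p+1))^{1/p}(∫₀¹ h(t)dt)^{1/q}[ε₁^{1/p} C^{1/q} + ε₃^{1/p} D^{1/q}]. -/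

import Mathlib

open MeasureTheory

lemma aux_pow (u v c p : ℝ) (huc : u ≤ c) (hcv : c ≤ v) (hp : 0 < p) :
    ∫ x in u..v, |x - c| ^ p = ((c - u) ^ (p+1) + (v - c) ^ (p+1)) / (p+1) := by
  have hcont : Continuous (fun x : ℝ => |x - c| ^ p) := by
    apply Continuous.rpow_const (by fun_prop)
    intro x; right; exact hp.le
  rw [← intervalIntegral.integral_add_adjacent_intervals (b := c)
    (hcont.intervalIntegrable _ _) (hcont.intervalIntegrable _ _)]
  have h1 : ∫ x in u..c, |x - c| ^ p = ∫ x in u..c, (c - x) ^ p := by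
    apply intervalIntegral.integral_congr
    intro x hx
    rw [Set.uIcc_of_le huc] at hx
    simp only
    rw [abs_sub_comm, abs_of_nonneg (by linarith [hx.2])]
  have h2 : ∫ x in c..v, |x - c| ^ p = ∫ x in c..v, (x - c) ^ p := by
    apply intervalIntegral.integral_congr
    intro x hx
    rw [Set.uIcc_of_le hcv] at hx
    simp only
    rw [abs_of_nonneg (by linarith [hx.1])]
  rw [h1, h2, intervalIntegral.integral_comp_sub_left (fun x => x ^ p),
    intervalIntegral.integral_comp_sub_right (fun x => x ^ p),
    integral_rpow (Or.inl (by linarith)), integral_rpow (Or.inl (by linarith))]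
  simp [Real.zero_rpow (by linarith : p + 1 ≠ 0)]
  ring

lemma aux_main (u v c p q A B : ℝ) (F h : ℝ → ℝ) (huc : u ≤ c) (hcv : c ≤ v)
    (hpq : p.HolderConjugate q) (hA : 0 ≤ A) (hB : 0 ≤ B)
    (hF : IntervalIntegrable F volume u v)
    (hh0 : ∀ t ∈ Set.Ioo (0:ℝ) 1, 0 ≤ h t)
    (hhint : IntervalIntegrable h volume 0 1)
    (hconv : ∀ t ∈ Set.Ioo (0:ℝ) 1,
      |F (t * u + (1 - t) * v)| ^ q ≤ h t * A + h (1 - t) * B) :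
    |∫ x in u..v, (x - c) * F x| ≤
      (((c - u) ^ (p+1) + (v - c) ^ (p+1)) / (p+1)) ^ (1/p) *
        ((v - u) * (A + B) * ∫ t in (0:ℝ)..1, h t) ^ (1/q) := by
  have hp := hpq.pos
  have hq := hpq.symm.pos
  have hH : 0 ≤ ∫ t in (0:ℝ)..1, h t := by
    rw [intervalIntegral.integral_of_le zero_le_one, integral_Ioc_eq_integral_Ioo]
    exact setIntegral_nonneg measurableSet_Ioo hh0
  have hE : 0 ≤ ((c - u) ^ (p+1) + (v - c) ^ (p+1)) / (p+1) := by
    have := Real.rpow_nonneg (sub_nonneg.2 huc) (p+1)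
    have := Real.rpow_nonneg (sub_nonneg.2 hcv) (p+1)
    positivity
  rcases (huc.trans hcv).eq_or_lt with huv | huv
  · subst huv
    simp only [intervalIntegral.integral_same, abs_zero]
    apply mul_nonneg (Real.rpow_nonneg hE _)
    apply Real.rpow_nonneg
    simp
  have hvu : 0 < v - u := by linarith
  -- dominating function
  set G : ℝ → ℝ := fun x => h ((v - x) / (v - u)) * A + h ((x - u) / (v - u)) * B with hG
  have hi1 : IntervalIntegrable (fun x => h ((v - x) / (v - u))) volume u v := by
    have h1 := (hhint.comp_sub_left 1).comp_mul_left (c := (v - u)⁻¹)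
    have h2 := h1.comp_sub_right u
    convert h2.symm using 1
    · ext x; congr 1; field_simp; ring
    · simp
    · simp
  have hi2 : IntervalIntegrable (fun x => h ((x - u) / (v - u))) volume u v := by
    have h1 := hhint.comp_mul_left (c := (v - u)⁻¹)
    have h2 := h1.comp_sub_right u
    convert h2 using 1
    · ext x; congr 1; field_simp
    · simp
    · simp
  have e1 : ∫ x in u..v, h ((v - x) / (v - u)) = (v - u) * ∫ t in (0:ℝ)..1, h t := by
    rw [intervalIntegral.integral_comp_sub_left (fun y => h (y / (v - u))),
      intervalIntegral.integral_comp_div _ hvu.ne']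
    simp [hvu.ne']
  have e2 : ∫ x in u..v, h ((x - u) / (v - u)) = (v - u) * ∫ t in (0:ℝ)..1, h t := by
    rw [intervalIntegral.integral_comp_sub_right (fun y => h (y / (v - u))),
      intervalIntegral.integral_comp_div _ hvu.ne']
    simp [hvu.ne']
  have hGi : IntervalIntegrable G volume u v := (hi1.mul_const A).add (hi2.mul_const B)
  have hGe : ∫ x in u..v, G x = (v - u) * (A + B) * ∫ t in (0:ℝ)..1, h t := by
    rw [hG, intervalIntegral.integral_add (hi1.mul_const A) (hi2.mul_const B),
      intervalIntegral.integral_mul_const, intervalIntegral.integral_mul_const, e1, e2]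
    ring
  have hdom : ∀ x ∈ Set.Ioo u v, |F x| ^ q ≤ G x := by
    intro x hx
    have := hconv ((v - x) / (v - u)) ⟨div_pos (by linarith [hx.2]) hvu, by
      rw [div_lt_one hvu]; linarith [hx.1]⟩
    have e : 1 - (v - x) / (v - u) = (x - u) / (v - u) := by field_simp; ring
    have e' : (v - x) / (v - u) * u + (x - u) / (v - u) * v = x := by field_simp; ring
    rwa [e, e'] at this
  let μ := volume.restrict (Set.Ioo u v)
  have hFm : AEStronglyMeasurable F μ :=
    ((intervalIntegrable_iff_integrableOn_Ioo_of_le huv.le).1 hF).aestronglyMeasurable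
  have hGμ : Integrable G μ := (intervalIntegrable_iff_integrableOn_Ioo_of_le huv.le).1 hGi
  have hFq : Integrable (fun x => ‖F x‖ ^ q) μ := by
    refine hGμ.mono' ?_ ?_
    · exact (hFm.norm.aemeasurable.pow_const q).aestronglyMeasurable
    · filter_upwards [ae_restrict_mem measurableSet_Ioo] with x hx
      rw [Real.norm_of_nonneg (by positivity)]
      exact hdom x hx
  have hFL : MemLp F (ENNReal.ofReal q) μ := by
    rw [← integrable_norm_rpow_iff hFm (by simpa using hq) (by simp),
      ENNReal.toReal_ofReal hq.le]
    exact hFq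
  have hKL : MemLp (fun x : ℝ => x - c) (ENNReal.ofReal p) μ := by
    rw [← integrable_norm_rpow_iff (by fun_prop) (by simpa using hp) (by simp),
      ENNReal.toReal_ofReal hp.le]
    have hcont : Continuous (fun x : ℝ => ‖x - c‖ ^ p) := by
      apply Continuous.rpow_const (by fun_prop)
      intro x; right; exact hp.le
    exact (intervalIntegrable_iff_integrableOn_Ioo_of_le huv.le).1
      (hcont.intervalIntegrable u v)
  have hol := integral_mul_norm_le_Lp_mul_Lq hpq hKL hFL
  have hEe : ∫ x, ‖x - c‖ ^ p ∂μ = ((c - u) ^ (p+1) + (v - c) ^ (p+1)) / (p+1) := by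
    rw [← aux_pow u v c p huc hcv hp, intervalIntegral.integral_of_le huv.le,
      integral_Ioc_eq_integral_Ioo]
    rfl
  have hFe : ∫ x, ‖F x‖ ^ q ∂μ ≤ (v - u) * (A + B) * ∫ t in (0:ℝ)..1, h t := by
    rw [← hGe, intervalIntegral.integral_of_le huv.le, integral_Ioc_eq_integral_Ioo]
    exact setIntegral_mono_on hFq hGμ measurableSet_Ioo hdom
  rw [hEe] at hol
  calc |∫ x in u..v, (x - c) * F x| = ‖∫ x, (x - c) * F x ∂μ‖ := by
        rw [intervalIntegral.integral_of_le huv.le, integral_Ioc_eq_integral_Ioo]; rfl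
    _ ≤ ∫ x, ‖x - c‖ * ‖F x‖ ∂μ := by
        refine (norm_integral_le_integral_norm _).trans_eq ?_
        simp only [norm_mul]
    _ ≤ _ := hol
    _ ≤ _ := by
        gcongr

lemma aux_parts (u v c : ℝ) (f F : ℝ → ℝ) (huv : u ≤ v)
    (hd : ∀ x ∈ Set.Icc u v, HasDerivAt f (F x) x)
    (hF : IntervalIntegrable F volume u v) :
    ∫ x in u..v, (x - c) * F x = (v - c) * f v - (u - c) * f u - ∫ x in u..v, f x := by
  have := intervalIntegral.integral_mul_deriv_eq_deriv_mul (a := u) (b := v)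
    (u := fun x => x - c) (u' := fun _ => 1) (v := f) (v' := F)
    (fun x _ => (hasDerivAt_id x).sub_const c)
    (fun x hx => hd x (by rwa [Set.uIcc_of_le huv] at hx)) (by simp) hF
  simpa using this

lemma aux_scale (w x y p q H K : ℝ) (hw : 0 < w) (hx : 0 ≤ x) (hy : 0 ≤ y)
    (hpq : p.HolderConjugate q) (hH : 0 ≤ H) (hK : 0 ≤ K) :
    (((w * x) ^ (p+1) + (w * y) ^ (p+1)) / (p+1)) ^ (1/p) * (w * K * H) ^ (1/q)
     = w * (w * (1/(p+1)) ^ (1/p) * H ^ (1/q) *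
        ((x ^ (p+1) + y ^ (p+1)) ^ (1/p) * K ^ (1/q))) := by
  have hp := hpq.pos
  have e : ((w * x) ^ (p+1) + (w * y) ^ (p+1)) / (p+1)
      = w ^ (p+1) * (1/(p+1)) * (x ^ (p+1) + y ^ (p+1)) := by
    rw [Real.mul_rpow hw.le hx, Real.mul_rpow hw.le hy]; ring
  have hs : 0 ≤ x ^ (p+1) + y ^ (p+1) := by positivity
  rw [e, Real.mul_rpow (by positivity) hs, Real.mul_rpow (by positivity) (by positivity),
    Real.mul_rpow (by positivity) hH, Real.mul_rpow hw.le hK, ← Real.rpow_mul hw.le]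
  have e2 : w ^ ((p+1) * (1/p)) * w ^ (1/q) = w * w := by
    rw [← Real.rpow_add hw]
    have h1 := hpq.inv_add_inv_eq_one
    have : (p+1) * (1/p) + 1/q = 2 := by
      rw [one_div, one_div, add_mul, mul_inv_cancel₀ hp.ne']; linarith
    rw [this, Real.rpow_two, sq]
  linear_combination ((1/(p+1)) ^ (1/p) * H ^ (1/q) *
        ((x ^ (p+1) + y ^ (p+1)) ^ (1/p) * K ^ (1/q))) * e2

theorem stmt_7 (I : Set ℝ) (h f f' : ℝ → ℝ) (a b α l p q C D ε₁ ε₃ : ℝ)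
    (hab : a < b) (hI : Set.Icc a b ⊆ interior I)
    (hα : α ∈ Set.Icc (0:ℝ) 1) (hl : l ∈ Set.Icc (0:ℝ) 1)
    (hq : 1 < q) (hpq : 1/p + 1/q = 1)
    (hder : ∀ x ∈ interior I, HasDerivAt f (f' x) x)
    (hint : IntervalIntegrable f' volume a b)
    (hh0 : ∀ t ∈ Set.Ioo (0:ℝ) 1, 0 ≤ h t) (hhne : h ≠ 0)
    (hhint : IntervalIntegrable h volume 0 1)
    (hconv : ∀ x ∈ Set.Icc a b, ∀ y ∈ Set.Icc a b, ∀ t ∈ Set.Ioo (0:ℝ) 1,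
      |f' (t * x + (1 - t) * y)| ^ q ≤ h t * |f' x| ^ q + h (1 - t) * |f' y| ^ q)
    (hC : C = (1 - α) * (|f' ((1 - α) * b + α * a)| ^ q + |f' a| ^ q))
    (hD : D = α * (|f' ((1 - α) * b + α * a)| ^ q + |f' b| ^ q))
    (hε₁ : ε₁ = (α * l) ^ (p+1) + (1 - α - α * l) ^ (p+1))
    (hε₃ : ε₃ = (l * (1 - α)) ^ (p+1) + (α - l * (1 - α)) ^ (p+1))
    (hcase₁ : α * l ≤ 1 - α) (hcase₂ : 1 - α ≤ 1 - l * (1 - α)) :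
    |l * (α * f a + (1 - α) * f b) + (1 - l) * f (α * a + (1 - α) * b)
        - (1 / (b - a)) * ∫ x in a..b, f x|
      ≤ (b - a) * (1/(p+1)) ^ (1/p) * (∫ t in (0:ℝ)..1, h t) ^ (1/q) *
        (ε₁ ^ (1/p) * C ^ (1/q) + ε₃ ^ (1/p) * D ^ (1/q)) := by
  obtain ⟨hα0, hα1⟩ := hα
  obtain ⟨hl0, hl1⟩ := hl
  have hPQ : p.HolderConjugate q := by
    have hq0 : 0 < q := by linarith
    have hp : 0 < p := by
      have : 1/q < 1 := by rw [div_lt_one hq0]; exact hq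
      exact one_div_pos.1 (by linarith)
    exact ⟨by simpa using hpq, hp, hq0⟩
  set m := α * a + (1 - α) * b with hm
  have hm' : (1 - α) * b + α * a = m := by rw [hm]; ring
  rw [hm'] at hC hD
  have hw : 0 < b - a := by linarith
  have ham : m - a = (b - a) * (1 - α) := by rw [hm]; ring
  have hmb : b - m = (b - a) * α := by rw [hm]; ring
  have h1α : 0 ≤ 1 - α := by linarith
  have ham' : a ≤ m := by have := mul_nonneg hw.le h1α; linarith
  have hmb' : m ≤ b := by have := mul_nonneg hw.le hα0; linarith
  have hH : 0 ≤ ∫ t in (0:ℝ)..1, h t := by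
    rw [intervalIntegral.integral_of_le zero_le_one, integral_Ioc_eq_integral_Ioo]
    exact setIntegral_nonneg measurableSet_Ioo hh0
  have hF1 : IntervalIntegrable f' volume a m :=
    hint.mono_set (by rw [Set.uIcc_of_le ham', Set.uIcc_of_le hab.le]; exact Set.Icc_subset_Icc_right hmb')
  have hF2 : IntervalIntegrable f' volume m b :=
    hint.mono_set (by rw [Set.uIcc_of_le hmb', Set.uIcc_of_le hab.le]; exact Set.Icc_subset_Icc_left ham')
  have hd : ∀ x ∈ Set.Icc a b, HasDerivAt f (f' x) x := fun x hx => hder x (hI hx)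
  have hfc : ContinuousOn f (Set.Icc a b) := fun x hx => (hd x hx).continuousAt.continuousWithinAt
  have hf1 : IntervalIntegrable f volume a m :=
    (hfc.mono (Set.Icc_subset_Icc_right hmb')).intervalIntegrable_of_Icc ham'
  have hf2 : IntervalIntegrable f volume m b :=
    (hfc.mono (Set.Icc_subset_Icc_left ham')).intervalIntegrable_of_Icc hmb'
  set c₁ := a + (b - a) * (α * l) with hc₁
  set c₂ := b - (b - a) * (l * (1 - α)) with hc₂
  have n1 : 0 ≤ α * l := mul_nonneg hα0 hl0
  have n2 : 0 ≤ l * (1 - α) := mul_nonneg hl0 h1α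
  have n3 : 0 ≤ 1 - α - α * l := by linarith
  have n4 : 0 ≤ α - l * (1 - α) := by linarith
  have k1 : c₁ - a = (b - a) * (α * l) := by rw [hc₁]; ring
  have k2 : m - c₁ = (b - a) * (1 - α - α * l) := by rw [hc₁]; linear_combination ham
  have k3 : b - c₂ = (b - a) * (l * (1 - α)) := by rw [hc₂]; ring
  have k4 : c₂ - m = (b - a) * (α - l * (1 - α)) := by rw [hc₂]; linear_combination hmb
  have p1 := aux_parts a m c₁ f f' ham' (fun x hx => hd x ⟨hx.1, hx.2.trans hmb'⟩) hF1
  have p2 := aux_parts m b c₂ f f' hmb' (fun x hx => hd x ⟨ham'.trans hx.1, hx.2⟩) hF2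
  have hma : a ∈ Set.Icc a b := ⟨le_rfl, hab.le⟩
  have hmbm : b ∈ Set.Icc a b := ⟨hab.le, le_rfl⟩
  have hmm : m ∈ Set.Icc a b := ⟨ham', hmb'⟩
  have m1 := aux_main a m c₁ p q (|f' a| ^ q) (|f' m| ^ q) f' h
    (by have := mul_nonneg hw.le n1; linarith) (by have := mul_nonneg hw.le n3; linarith)
    hPQ (by positivity) (by positivity) hF1 hh0 hhint (hconv a hma m hmm)
  have m2 := aux_main m b c₂ p q (|f' m| ^ q) (|f' b| ^ q) f' h
    (by have := mul_nonneg hw.le n4; linarith) (by have := mul_nonneg hw.le n2; linarith)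
    hPQ (by positivity) (by positivity) hF2 hh0 hhint (hconv m hmm b hmbm)
  have hC0 : 0 ≤ C := by rw [hC]; positivity
  have hD0 : 0 ≤ D := by rw [hD]; positivity
  have q1 : (m - a) * (|f' a| ^ q + |f' m| ^ q) = (b - a) * C := by rw [ham, hC]; ring
  have q2 : (b - m) * (|f' m| ^ q + |f' b| ^ q) = (b - a) * D := by rw [hmb, hD]; ring
  rw [k1, k2, q1, aux_scale _ _ _ p q _ _ hw n1 n3 hPQ hH hC0, ← hε₁] at m1
  rw [k4, k3, q2, aux_scale _ _ _ p q _ _ hw n4 n2 hPQ hH hD0,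
    add_comm ((α - l * (1 - α)) ^ (p+1)), ← hε₃] at m2
  have key : (b - a) * (l * (α * f a + (1 - α) * f b) + (1 - l) * f m
        - (1 / (b - a)) * ∫ x in a..b, f x)
      = (∫ x in a..m, (x - c₁) * f' x) + ∫ x in m..b, (x - c₂) * f' x := by
    rw [p1, p2, ← intervalIntegral.integral_add_adjacent_intervals hf1 hf2, mul_sub,
      ← mul_assoc (b - a) (1 / (b - a)), mul_one_div_cancel hw.ne']
    linear_combination (-f m) * k2 - f a * k1 - f b * k3 - f m * k4
  refine le_of_mul_le_mul_left ?_ hw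
  calc _ = |(b - a) * (l * (α * f a + (1 - α) * f b) + (1 - l) * f m
        - (1 / (b - a)) * ∫ x in a..b, f x)| := by rw [abs_mul, abs_of_pos hw]
    _ ≤ _ := by
      rw [key]
      refine (abs_add_le _ _).trans ((add_le_add m1 m2).trans_eq ?_)
      ring
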